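/- arXiv:1911.09944 — 2 statements merged into one kernel-verified Lean document; each statement's English description precedes it below -/
import Mathlib

section
/- For all integers n ≥ 1 and q ≥ 2, there exists a single-insertion-covering code C ⊆ Σ_q^n with |C| ≤ 7·q^{n+1}/((n+1)(q−1)+1); equivalently, K_I^q(n,1) ≤ 7 q^{n+1}/((n+1)(q−1)+1). -/
/-- derandomized random choice -/
lemma cov_pick {X I : Type*} [DecidableEq X] [DecidableEq I] (B : I → Finset X) (p w : ℝ)
    (hp0 : 0 ≤ p) (hp1 : p ≤ 1) (S : Finset X) :
    ∀ V : Finset I, ∃ C : Finset X, C ⊆ S ∧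
      (C.card : ℝ) + w * ((V.filter (fun u => Disjoint (B u) C)).card : ℝ) ≤
        p * S.card + w * ∑ u ∈ V, (1 - p) ^ (B u ∩ S).card := by
  induction S using Finset.induction_on with
  | empty =>
    intro V
    exact ⟨∅, by simp, by simp⟩
  | insert x S hx ih =>
    intro V
    obtain ⟨C1, h1s, h1⟩ := ih (V.filter (fun u => x ∉ B u))
    obtain ⟨C2, h2s, h2⟩ := ih V
    have hxC : x ∉ C1 := fun h => hx (h1s h)
    have e1 : ((V.filter (fun u => x ∉ B u)).filter (fun u => Disjoint (B u) C1))
        = V.filter (fun u => Disjoint (B u) (insert x C1)) := by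
      rw [Finset.filter_filter]
      apply Finset.filter_congr
      intro u _
      rw [Finset.disjoint_insert_right]
    rw [e1] at h1
    have hcard : ((insert x S).card : ℝ) = S.card + 1 := by
      rw [Finset.card_insert_of_notMem hx]; push_cast; ring
    have e2 : ∑ u ∈ V, (1 - p) ^ (B u ∩ insert x S).card
        = p * ∑ u ∈ V.filter (fun u => x ∉ B u), (1 - p) ^ (B u ∩ S).card
          + (1 - p) * ∑ u ∈ V, (1 - p) ^ (B u ∩ S).card := by
      rw [Finset.sum_filter, Finset.mul_sum, Finset.mul_sum, ← Finset.sum_add_distrib]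
      apply Finset.sum_congr rfl
      intro u _
      by_cases hu : x ∈ B u
      · rw [Finset.inter_insert_of_mem hu, Finset.card_insert_of_notMem (by simp [hx])]
        simp [hu, pow_succ]; ring
      · rw [Finset.inter_insert_of_notMem hu]
        simp [hu]; ring
    rw [hcard, e2]
    by_contra hcon
    push Not at hcon
    have a1 := hcon (insert x C1) (Finset.insert_subset_insert _ h1s)
    have a2 := hcon C2 (h2s.trans (Finset.subset_insert _ _))
    rw [Finset.card_insert_of_notMem hxC] at a1
    push_cast at a1
    set P := ∑ u ∈ V.filter (fun u => x ∉ B u), (1 - p) ^ (B u ∩ S).card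
    set Q := ∑ u ∈ V, (1 - p) ^ (B u ∩ S).card
    have b1 : p * (S.card + 1) + w * (p * P + (1 - p) * Q) < 1 + (p * S.card + w * P) := by linarith
    have b2 : p * (S.card + 1) + w * (p * P + (1 - p) * Q) < p * S.card + w * Q := by linarith
    rcases hp0.eq_or_lt with h | h
    · subst h; simp at b2
    · nlinarith [mul_lt_mul_of_pos_left b1 h, mul_le_mul_of_nonneg_left b2.le (sub_nonneg.2 hp1)]

/-- all words of length n -/
def covW (q : ℕ) : ℕ → Finset (List (Fin q))
  | 0 => {[]}
  | n + 1 => (Finset.univ ×ˢ covW q n).image (fun z => z.1 :: z.2)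

lemma cov_mem_W (q : ℕ) : ∀ (n : ℕ) (u : List (Fin q)), u ∈ covW q n ↔ u.length = n := by
  intro n
  induction n with
  | zero => intro u; simp [covW]
  | succ n ih =>
    intro u
    cases u with
    | nil => simp [covW]
    | cons x u => simp [covW, ih]

lemma cov_sum_W (q n : ℕ) (f : List (Fin q) → ℝ) :
    ∑ u ∈ covW q (n + 1), f u = ∑ u ∈ covW q n, ∑ x : Fin q, f (x :: u) := by
  rw [covW, Finset.sum_image, Finset.sum_product_right]
  rintro ⟨a, b⟩ _ ⟨c, d⟩ _ h
  simpa using h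

lemma cov_card_W (q n : ℕ) : (covW q n).card = q ^ n := by
  induction n with
  | zero => simp [covW]
  | succ n ih =>
    rw [covW, Finset.card_image_of_injective, Finset.card_product, ih]
    · simp [pow_succ, mul_comm]
    · rintro ⟨a, b⟩ ⟨c, d⟩ h
      simpa using h

/-- single deletions -/
def covDel {q : ℕ} : List (Fin q) → Finset (List (Fin q))
  | [] => ∅
  | x :: u => insert u ((covDel u).image (List.cons x))

lemma cov_del_spec {q : ℕ} : ∀ (u c : List (Fin q)), c ∈ covDel u →
    c.length + 1 = u.length ∧ c.Sublist u := by
  intro u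
  induction u with
  | nil => intro c h; simp [covDel] at h
  | cons x u ih =>
    intro c h
    simp only [covDel, Finset.mem_insert, Finset.mem_image] at h
    rcases h with rfl | ⟨d, hd, rfl⟩
    · exact ⟨by simp, List.sublist_cons_self _ _⟩
    · obtain ⟨h1, h2⟩ := ih d hd
      exact ⟨by simp [h1], h2.cons_cons x⟩

lemma cov_del_card {q : ℕ} (x y : Fin q) (v : List (Fin q)) :
    (covDel (y :: v)).card + (if x = y then 0 else 1) ≤ (covDel (x :: y :: v)).card := by
  have hi : ((covDel (y :: v)).image (List.cons x)).card = (covDel (y :: v)).card :=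
    Finset.card_image_of_injective _ List.cons_injective
  rw [covDel.eq_2 x (y :: v)]
  split_ifs with h
  · rw [add_zero, ← hi]
    exact Finset.card_le_card (Finset.subset_insert _ _)
  · rw [Finset.card_insert_of_notMem, hi]
    simp [h]

lemma cov_sum_del (q n : ℕ) (t : ℝ) (h0 : 0 ≤ t) (h1 : t ≤ 1) :
    ∑ u ∈ covW q (n + 1), t ^ (covDel u).card ≤ q * t * (1 + (q - 1) * t) ^ n := by
  induction n with
  | zero => rw [cov_sum_W]; simp [covW, covDel]
  | succ n ih =>
    rw [cov_sum_W]
    have key : ∀ u ∈ covW q (n + 1), ∑ x : Fin q, t ^ (covDel (x :: u)).card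
        ≤ t ^ (covDel u).card * (1 + (q - 1) * t) := by
      intro u hu
      rw [cov_mem_W] at hu
      obtain ⟨y, v, rfl⟩ := List.exists_cons_of_length_eq_add_one hu
      calc ∑ x : Fin q, t ^ (covDel (x :: y :: v)).card
          ≤ ∑ x : Fin q, t ^ (covDel (y :: v)).card * (t + if x = y then 1 - t else 0) := by
            apply Finset.sum_le_sum
            intro x _
            refine (pow_le_pow_of_le_one h0 h1 (cov_del_card x y v)).trans ?_
            split_ifs <;> simp [pow_succ]
        _ = t ^ (covDel (y :: v)).card * (1 + (q - 1) * t) := by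
            rw [← Finset.mul_sum, Finset.sum_add_distrib]
            simp
            left; ring
    calc _ ≤ ∑ u ∈ covW q (n + 1), t ^ (covDel u).card * (1 + (q - 1) * t) :=
          Finset.sum_le_sum key
      _ = (∑ u ∈ covW q (n + 1), t ^ (covDel u).card) * (1 + (q - 1) * t) := by
          rw [Finset.sum_mul]
      _ ≤ (q * t * (1 + (q - 1) * t) ^ n) * (1 + (q - 1) * t) := by
          rcases Nat.eq_zero_or_pos q with rfl | hq
          · simp [covW]
          · have : (1:ℝ) ≤ q := by exact_mod_cast hq
            exact mul_le_mul_of_nonneg_right ih (by nlinarith)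
      _ = _ := by ring

/-- covering code -/
def covIs (q n : ℕ) (C : Finset (List (Fin q))) : Prop :=
  (∀ c ∈ C, c.length = n) ∧
      (∀ y : List (Fin q), y.length = n + 1 → ∃ c ∈ C, c.Sublist y)

lemma cov_step (q a s : ℕ) (hq : 2 ≤ q) (D : Finset (List (Fin q))) (hD : covIs q s D)
    (p : ℝ) (hp0 : 0 ≤ p) (hp1 : p ≤ 1) :
    ∃ C, covIs q (a + 1 + s) C ∧ (C.card : ℝ) ≤ p * q ^ (a + 1 + s) +
      D.card * (q * (1 - p) * (1 + (q - 1) * (1 - p)) ^ a) := by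
  obtain ⟨C0, hs, hc⟩ := cov_pick (fun u : List (Fin q) => covDel u) p (D.card / q ^ (s + 1))
    hp0 hp1 (covW q a) (covW q (a + 1))
  set U := (covW q (a + 1)).filter (fun u => Disjoint (covDel u) C0) with hU
  have hqp : (0:ℝ) < q ^ (s + 1) := by positivity
  have hsum : ∑ u ∈ covW q (a + 1), (1 - p) ^ (covDel u ∩ covW q a).card
      ≤ q * (1 - p) * (1 + (q - 1) * (1 - p)) ^ a := by
    refine le_trans (le_of_eq ?_) (cov_sum_del q a (1 - p) (by linarith) (by linarith))
    apply Finset.sum_congr rfl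
    intro u hu
    rw [Finset.inter_eq_left.2]
    intro c hcu
    rw [cov_mem_W] at hu ⊢
    have := (cov_del_spec u c hcu).1
    omega
  refine ⟨(C0 ×ˢ covW q (s + 1)).image (fun z => z.1 ++ z.2) ∪
    (U ×ˢ D).image (fun z => z.1 ++ z.2), ⟨?_, ?_⟩, ?_⟩
  · intro c hc
    simp only [Finset.mem_union, Finset.mem_image, Finset.mem_product, Prod.exists] at hc
    rcases hc with ⟨u, v, ⟨hu, hv⟩, rfl⟩ | ⟨u, v, ⟨hu, hv⟩, rfl⟩
    · have h1 := hs hu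
      rw [cov_mem_W] at h1 hv
      simp [h1, hv]; omega
    · have h1 := (Finset.mem_filter.1 hu).1
      rw [cov_mem_W] at h1
      have := hD.1 v hv
      simp [h1, this]
  · intro y hy
    have hy1 : (y.take (a + 1)).length = a + 1 := by simp; omega
    have hy2 : (y.drop (a + 1)).length = s + 1 := by simp; omega
    by_cases hd : Disjoint (covDel (y.take (a + 1))) C0
    · obtain ⟨d, hd1, hd2⟩ := hD.2 _ hy2
      refine ⟨y.take (a + 1) ++ d, ?_, ?_⟩
      · apply Finset.mem_union_right
        exact Finset.mem_image.2 ⟨(_, _), Finset.mem_product.2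
          ⟨Finset.mem_filter.2 ⟨(cov_mem_W _ _ _).2 hy1, hd⟩, hd1⟩, rfl⟩
      · conv_rhs => rw [← List.take_append_drop (a + 1) y]
        exact (List.Sublist.refl _).append hd2
    · rw [Finset.not_disjoint_iff] at hd
      obtain ⟨c, hc1, hc2⟩ := hd
      refine ⟨c ++ y.drop (a + 1), ?_, ?_⟩
      · apply Finset.mem_union_left
        exact Finset.mem_image.2 ⟨(_, _), Finset.mem_product.2
          ⟨hc2, (cov_mem_W _ _ _).2 hy2⟩, rfl⟩
      · conv_rhs => rw [← List.take_append_drop (a + 1) y]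
        exact (cov_del_spec _ _ hc1).2.append (List.Sublist.refl _)
  · have h1 : ((((C0 ×ˢ covW q (s + 1)).image (fun z => z.1 ++ z.2) ∪
        (U ×ˢ D).image (fun z => z.1 ++ z.2)).card : ℕ) : ℝ) ≤
        C0.card * q ^ (s + 1) + U.card * D.card := by
      have : ((C0 ×ˢ covW q (s + 1)).image (fun z => z.1 ++ z.2) ∪
        (U ×ˢ D).image (fun z => z.1 ++ z.2)).card ≤ C0.card * q ^ (s + 1) + U.card * D.card := by
        refine (Finset.card_union_le _ _).trans (add_le_add ?_ ?_)
        · refine Finset.card_image_le.trans ?_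
          rw [Finset.card_product, cov_card_W]
        · refine Finset.card_image_le.trans ?_
          rw [Finset.card_product]
      exact_mod_cast this
    refine h1.trans ?_
    rw [cov_card_W] at hc
    have h2 := hc.trans (add_le_add_right (mul_le_mul_of_nonneg_left hsum
      (by positivity : (0:ℝ) ≤ D.card / q ^ (s + 1))) _)
    have h3 := mul_le_mul_of_nonneg_right h2 hqp.le
    have e1 : ((C0.card : ℝ) + D.card / q ^ (s + 1) * U.card) * q ^ (s + 1)
        = C0.card * q ^ (s + 1) + U.card * D.card := by field_simp
    rw [e1] at h3
    refine h3.trans (le_of_eq ?_)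
    push_cast
    field_simp
    ring

lemma cov_main (q : ℕ) (hq : 2 ≤ q) (n : ℕ) : ∃ C, covIs q n C ∧
    (C.card : ℝ) ≤ 7 / (n * ((q - 1) / q) + 1) * q ^ n := by
  induction n using Nat.strong_induction_on with
  | _ n ih =>
  have hq' : (2:ℝ) ≤ q := by exact_mod_cast hq
  obtain ⟨b, hb⟩ : ∃ b : ℝ, b = (q - 1) / q := ⟨_, rfl⟩
  have hbq : b * q = q - 1 := by rw [hb]; field_simp
  have hb1 : b ≤ 1 := by nlinarith
  have hb2 : 1 / 2 ≤ b := by nlinarith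
  rw [← hb] at ih ⊢
  rcases Nat.lt_or_ge n 7 with hn | hn
  · refine ⟨covW q n, ⟨fun c hc => (cov_mem_W _ _ _).1 hc, fun y hy =>
      ⟨y.tail, (cov_mem_W _ _ _).2 (by simp [hy]), List.tail_sublist y⟩⟩, ?_⟩
    rw [cov_card_W]
    push_cast
    have : (n:ℝ) ≤ 6 := by exact_mod_cast (by omega : n ≤ 6)
    have hn0 : (0:ℝ) ≤ n := by positivity
    have : (1:ℝ) ≤ 7 / (n * b + 1) := by
      rw [le_div_iff₀ (by nlinarith)]; nlinarith
    nlinarith [pow_pos (by linarith : (0:ℝ) < q) n]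
  · obtain ⟨a, s, hn', hsa, has, ha⟩ : ∃ a s, n = a + 1 + s ∧ s ≤ a ∧ a ≤ s + 1 ∧ 3 ≤ a :=
      ⟨n / 2, n - 1 - n / 2, by omega, by omega, by omega, by omega⟩
    obtain ⟨D, hD, hDc⟩ := ih s (by omega)
    subst hn'
    have hsa' : (s:ℝ) ≤ a := by exact_mod_cast hsa
    have has' : (a:ℝ) ≤ s + 1 := by exact_mod_cast has
    have ha' : (3:ℝ) ≤ a := by exact_mod_cast ha
    obtain ⟨A, hA⟩ : ∃ A : ℝ, A = a * b + 1 := ⟨_, rfl⟩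
    obtain ⟨S, hS⟩ : ∃ S : ℝ, S = s * b + 1 := ⟨_, rfl⟩
    have hA2 : 2 ≤ A := by nlinarith
    have hSA : S ≤ A := by nlinarith
    have hAS : A ≤ 2 * S := by nlinarith
    have hA0 : 0 < A := by linarith
    have hS0 : 0 < S := by linarith
    have hp1 : 2 / A ≤ 1 := by rw [div_le_one hA0]; exact hA2
    have hp0 : 0 ≤ 2 / A := by positivity
    obtain ⟨C, hC, hCc⟩ := cov_step q a s hq D hD (2 / A) hp0 hp1
    refine ⟨C, hC, hCc.trans ?_⟩
    obtain ⟨p, hp⟩ : ∃ p : ℝ, p = 2 / A := ⟨_, rfl⟩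
    rw [← hp] at hp0 hp1 ⊢
    have hpA : p * A = 2 := by rw [hp]; field_simp
    have hexp : (1 - p) * (1 - p * b) ^ a ≤ 1 / 7 := by
      have i1 : 1 - p ≤ Real.exp (-p) := Real.one_sub_le_exp_neg p
      have i2 : (1 - p * b) ^ a ≤ Real.exp (-(p * b)) ^ a :=
        pow_le_pow_left₀ (by nlinarith) (Real.one_sub_le_exp_neg _) a
      calc (1 - p) * (1 - p * b) ^ a ≤ Real.exp (-p) * Real.exp (-(p * b)) ^ a :=
            mul_le_mul i1 i2 (pow_nonneg (by nlinarith) _) (Real.exp_pos _).le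
        _ = Real.exp (-2) := by
            rw [← Real.exp_nat_mul, ← Real.exp_add]
            congr 1
            rw [← hpA, hA]; ring
        _ ≤ 1 / 7 := by
            rw [Real.exp_neg, one_div]
            apply inv_anti₀ (by norm_num)
            have : Real.exp 2 = Real.exp 1 * Real.exp 1 := by rw [← Real.exp_add]; norm_num
            rw [this]
            nlinarith [Real.exp_one_gt_d9]
    have e1 : (1 + ((q:ℝ) - 1) * (1 - p)) = q * (1 - p * b) := by
      rw [← hbq]; linear_combination hbq
    rw [e1, mul_pow]
    have hqa : (0:ℝ) < q ^ (a + 1) := by positivity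
    have hqn : (0:ℝ) < q ^ (a + 1 + s) := by positivity
    have hfin : 2 / A + 1 / S ≤ 7 / (((a + 1 + s : ℕ) : ℝ) * b + 1) := by
      have hN0 : 0 < ((a + 1 + s : ℕ) : ℝ) * b + 1 := by positivity
      have hN : ((a + 1 + s : ℕ) : ℝ) * b + 1 ≤ A + S := by
        push_cast; rw [hA, hS]; nlinarith
      refine le_trans ?_ (div_le_div_of_nonneg_left (by norm_num) hN0 hN)
      rw [div_add_div _ _ hA0.ne' hS0.ne', div_le_div_iff₀ (by positivity) (by positivity)]
      nlinarith [mul_nonneg hS0.le (sub_nonneg.2 hSA), mul_nonneg hA0.le (sub_nonneg.2 hAS)]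
    rw [← hS] at hDc
    calc p * q ^ (a + 1 + s) + D.card * (q * (1 - p) * (q ^ a * (1 - p * b) ^ a))
        = p * q ^ (a + 1 + s) + D.card * q ^ (a + 1) * ((1 - p) * (1 - p * b) ^ a) := by ring
      _ ≤ p * q ^ (a + 1 + s) + D.card * q ^ (a + 1) * (1 / 7) := by gcongr
      _ ≤ p * q ^ (a + 1 + s) + (7 / S * q ^ s) * q ^ (a + 1) * (1 / 7) := by gcongr
      _ = (2 / A + 1 / S) * q ^ (a + 1 + s) := by rw [hp]; ring
      _ ≤ _ := mul_le_mul_of_nonneg_right hfin hqn.le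


/-- Existence of small single-insertion-covering codes over `Σ_q`:
there is a single-insertion-covering code `C ⊆ Σ_q^n` with
`|C| ≤ 7·q^(n+1)/((n+1)(q-1)+1)`, i.e. `K_I^q(n,1) ≤ 7 q^(n+1)/((n+1)(q-1)+1)`. -/
theorem single_insertion_covering_upper_bound (n q : ℕ) (hn : 1 ≤ n) (hq : 2 ≤ q) :
    ∃ C : Finset (List (Fin q)),
      (∀ c ∈ C, c.length = n) ∧
      (∀ y : List (Fin q), y.length = n + 1 → ∃ c ∈ C, c.Sublist y) ∧
      (C.card : ℝ) ≤ 7 * (q : ℝ) ^ (n + 1) / (((n : ℝ) + 1) * ((q : ℝ) - 1) + 1) := by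
  obtain ⟨C, hC, hc⟩ := cov_main q hq n
  refine ⟨C, hC.1, hC.2, hc.trans (le_of_eq ?_)⟩
  have hq' : (2:ℝ) ≤ q := by exact_mod_cast hq
  have hq0 : (q:ℝ) ≠ 0 := by positivity
  have h1 : (n:ℝ) * ((q - 1) / q) + 1 ≠ 0 := by
    have : (0:ℝ) ≤ (q - 1) / q := div_nonneg (by linarith) (by linarith)
    positivity
  have e : ((n : ℝ) + 1) * ((q : ℝ) - 1) + 1 = q * (n * ((q - 1) / q) + 1) := by
    field_simp; ring
  rw [e, pow_succ]
  field_simp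
end

section
/- For every fixed integer q ≥ 2 and every fixed integer R ≥ 2, limsup_{n→∞} μ_D^q(n,R) ≤ e·(R·ln R + √(2R·ln R) + 1) · limsup_{n→∞} μ_D^q(n,1). -/
/-- `KD q n R` is the minimum cardinality of an `R`-deletion-covering code of
length-`n` words over the alphabet `Fin q`. -/
noncomputable def KD (q n R : ℕ) : ℕ :=
  sInf {k : ℕ | ∃ C : Finset (List (Fin q)),
    (∀ c ∈ C, c.length = n) ∧
    (∀ y : List (Fin q), y.length = n - R → ∃ c ∈ C, y.Sublist c) ∧
    C.card = k}

/-- The density `μ_D^q(n,R) = K_D^q(n,R)·n^R·(q-1)^R/(q^n·R!)` of optimal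
`R`-deletion-covering codes. -/
noncomputable def muD (q n R : ℕ) : ℝ :=
  (KD q n R : ℝ) * (n : ℝ) ^ R * ((q : ℝ) - 1) ^ R / ((q : ℝ) ^ n * (R.factorial : ℝ))

open Filter Topology

noncomputable def wordsF (q n : ℕ) : Finset (List (Fin q)) :=
  (List.finite_length_eq (Fin q) n).toFinset

lemma mem_wordsF {q n : ℕ} {l : List (Fin q)} : l ∈ wordsF q n ↔ l.length = n := by
  simp [wordsF]

lemma card_wordsF (q n : ℕ) : (wordsF q n).card = q ^ n := by
  have h : wordsF q n = (Finset.univ : Finset (List.Vector (Fin q) n)).map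
      ⟨fun v => v.1, Subtype.val_injective⟩ := by
    ext l
    simp only [mem_wordsF, Finset.mem_map, Finset.mem_univ, true_and]
    constructor
    · intro h; exact ⟨⟨l, h⟩, rfl⟩
    · rintro ⟨v, rfl⟩; exact v.2
  rw [h, Finset.card_map, Finset.card_univ, card_vector, Fintype.card_fin]

open Classical in
lemma ball_card (q : ℕ) (hq : 1 ≤ q) : ∀ (m r : ℕ) (y : List (Fin q)), y.length + r = m →
    m.choose r * (q - 1) ^ r ≤ ((wordsF q m).filter (fun c => y.Sublist c)).card := by
  intro m
  induction m with
  | zero =>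
    intro r y h
    obtain rfl : r = 0 := by omega
    have : y = [] := List.length_eq_zero_iff.1 (by omega)
    subst this
    simp only [Nat.choose_self, pow_zero, mul_one]
    apply Finset.card_pos.2
    exact ⟨[], by simp [mem_wordsF]⟩
  | succ m ih =>
    intro r y h
    cases y with
    | nil =>
      have : r = m + 1 := by simpa using h
      subst this
      simp only [Nat.choose_self, List.nil_sublist, Finset.filter_true, card_wordsF, one_mul]
      exact Nat.pow_le_pow_left (by omega) _
    | cons a y =>
      simp only [List.length_cons] at h
      have h1 := ih r y (by omega)
      set S1 := (wordsF q m).filter (fun c => y.Sublist c) with hS1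
      set S2 := (wordsF q m).filter (fun c => (a :: y).Sublist c) with hS2
      set T := (wordsF q (m+1)).filter (fun c => (a :: y).Sublist c) with hT
      have key : S1.card + (q - 1) * S2.card ≤ T.card := by
        have e1 : (S1.image (fun c => a :: c)).card = S1.card :=
          Finset.card_image_of_injective _ (fun x y h => by simpa using h)
        have e2 : (((Finset.univ.erase a) ×ˢ S2).image (fun p => p.1 :: p.2)).card
            = (q - 1) * S2.card := by
          rw [Finset.card_image_of_injective _ (fun x y h => by
            simp only [List.cons.injEq] at h; exact Prod.ext h.1 h.2),
            Finset.card_product, Finset.card_erase_of_mem (Finset.mem_univ _)]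
          simp
        rw [← e1, ← e2, ← Finset.card_union_of_disjoint]
        · apply Finset.card_le_card
          intro c hc
          rcases Finset.mem_union.1 hc with hc | hc
          · obtain ⟨d, hd, rfl⟩ := Finset.mem_image.1 hc
            rw [hS1, Finset.mem_filter, mem_wordsF] at hd
            rw [hT, Finset.mem_filter, mem_wordsF]
            exact ⟨by simp [hd.1], hd.2.cons_cons a⟩
          · obtain ⟨d, hd, rfl⟩ := Finset.mem_image.1 hc
            have hd2 := (Finset.mem_product.1 hd).2
            rw [hS2, Finset.mem_filter, mem_wordsF] at hd2
            rw [hT, Finset.mem_filter, mem_wordsF]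
            exact ⟨by simp [hd2.1], hd2.2.cons _⟩
        · rw [Finset.disjoint_left]
          intro c hc hc'
          obtain ⟨d, hd, rfl⟩ := Finset.mem_image.1 hc
          obtain ⟨d', hd', he⟩ := Finset.mem_image.1 hc'
          have := (Finset.mem_erase.1 (Finset.mem_product.1 hd').1).1
          simp only [List.cons.injEq] at he
          exact this he.1
      cases r with
      | zero =>
        simp only [Nat.choose_zero_right, pow_zero, mul_one] at h1 ⊢
        omega
      | succ r =>
        have h2 := ih r (a :: y) (by simp; omega)
        rw [← hS2] at h2
        rw [Nat.choose_succ_succ', add_mul, pow_succ]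
        have h3 : m.choose r * ((q-1)^r * (q-1)) ≤ (q-1) * S2.card := by
          calc m.choose r * ((q-1)^r * (q-1)) = (q-1) * (m.choose r * (q-1)^r) := by ring
            _ ≤ _ := Nat.mul_le_mul_left _ h2
        rw [pow_succ] at h1
        omega

open Classical in
lemma greedy {α β : Type*} (A : Finset α) (P : Finset β) (rel : α → β → Prop) (I : ℕ)
    (hA : 0 < A.card) (h : ∀ b ∈ P, I ≤ (A.filter (fun a => rel a b)).card) (M : ℕ) :
    ∃ S ⊆ A, S.card ≤ M ∧ ((P.filter (fun b => ∀ a ∈ S, ¬ rel a b)).card : ℝ) ≤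
      Real.exp (-((I : ℝ) / A.card * M)) * P.card := by
  induction M with
  | zero => exact ⟨∅, by simp, by simp, by simp⟩
  | succ M ih =>
    obtain ⟨S, hSA, hSM, hS⟩ := ih
    set U := P.filter (fun b => ∀ a ∈ S, ¬ rel a b) with hU
    have hdc : ∑ a ∈ A, (U.filter (fun b => rel a b)).card
        = ∑ b ∈ U, (A.filter (fun a => rel a b)).card :=
      Finset.sum_card_bipartiteAbove_eq_sum_card_bipartiteBelow rel
    have hge : U.card * I ≤ ∑ b ∈ U, (A.filter (fun a => rel a b)).card := by
      rw [← smul_eq_mul]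
      exact Finset.card_nsmul_le_sum _ _ _ (fun b hb => h b (Finset.mem_filter.1 hb).1)
    have hex : ∃ a ∈ A, U.card * I ≤ A.card * (U.filter (fun b => rel a b)).card := by
      by_contra! hcon
      have : ∑ a ∈ A, A.card * (U.filter (fun b => rel a b)).card < ∑ a ∈ A, U.card * I :=
        Finset.sum_lt_sum_of_nonempty (Finset.card_pos.1 hA) hcon
      rw [← Finset.mul_sum, hdc, Finset.sum_const, smul_eq_mul] at this
      have := Nat.lt_of_mul_lt_mul_left this
      omega
    obtain ⟨a, ha, hle⟩ := hex
    refine ⟨insert a S, ?_, ?_, ?_⟩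
    · exact Finset.insert_subset ha hSA
    · exact (Finset.card_insert_le _ _).trans (by omega)
    · have e : P.filter (fun b => ∀ a' ∈ insert a S, ¬ rel a' b) = U.filter (fun b => ¬ rel a b) := by
        ext b
        simp only [hU, Finset.mem_filter, Finset.mem_insert, forall_eq_or_imp]
        tauto
      rw [e]
      have hsplit := Finset.card_filter_add_card_filter_not (s := U) (fun b => rel a b)
      have hA' : (0:ℝ) < A.card := by exact_mod_cast hA
      have h1 : (U.card : ℝ) * I / A.card ≤ (U.filter (fun b => rel a b)).card := by
        rw [div_le_iff₀ hA']
        have : (U.card * I : ℝ) ≤ A.card * (U.filter (fun b => rel a b)).card := by exact_mod_cast hle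
        linarith
      have h2 : ((U.filter (fun b => rel a b)).card : ℝ) + (U.filter (fun b => ¬ rel a b)).card
          = U.card := by exact_mod_cast hsplit
      have h3 : 1 - (I:ℝ) / A.card ≤ Real.exp (-((I:ℝ) / A.card)) := by
        have := Real.add_one_le_exp (-((I:ℝ) / A.card)); linarith
      calc ((U.filter (fun b => ¬ rel a b)).card : ℝ) ≤ U.card * (1 - (I:ℝ)/A.card) := by
            have : (U.card : ℝ) * I / A.card = U.card * (I / A.card) := by ring
            linarith
        _ ≤ U.card * Real.exp (-((I:ℝ) / A.card)) := by gcongr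
        _ ≤ (Real.exp (-((I : ℝ) / A.card * M)) * P.card) * Real.exp (-((I:ℝ) / A.card)) := by gcongr
        _ = _ := by
            rw [mul_right_comm, ← Real.exp_add]; congr 2; push_cast; ring

open Classical in
lemma greedy' {α β : Type*} (A : Finset α) (P : Finset β) (rel : α → β → Prop) (I : ℕ)
    (hA : 0 < A.card) (h : ∀ b ∈ P, I ≤ (A.filter (fun a => rel a b)).card) (M : ℕ) :
    ∃ S ⊆ A, S.card ≤ M ∧ ∃ U ⊆ P, (∀ b ∈ P, b ∉ U → ∃ a ∈ S, rel a b) ∧ (U.card : ℝ) ≤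
      Real.exp (-((I : ℝ) / A.card * M)) * P.card := by
  obtain ⟨S, h1, h2, h3⟩ := greedy A P rel I hA h M
  refine ⟨S, h1, h2, _, Finset.filter_subset _ _, ?_, h3⟩
  intro b hb hu
  by_contra! hc
  exact hu (Finset.mem_filter.2 ⟨hb, hc⟩)

lemma KD_le {q n R : ℕ} (C : Finset (List (Fin q))) (h1 : ∀ c ∈ C, c.length = n)
    (h2 : ∀ y : List (Fin q), y.length = n - R → ∃ c ∈ C, y.Sublist c) : KD q n R ≤ C.card :=
  Nat.sInf_le ⟨C, h1, h2, rfl⟩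

lemma exists_sup {q : ℕ} (hq : 1 ≤ q) (y : List (Fin q)) (n : ℕ) (h : y.length ≤ n) :
    ∃ c : List (Fin q), c.length = n ∧ y.Sublist c :=
  ⟨y ++ List.replicate (n - y.length) ⟨0, hq⟩, by simp; omega, List.sublist_append_left _ _⟩

lemma KD_spec {q : ℕ} (hq : 1 ≤ q) (n R : ℕ) : ∃ C : Finset (List (Fin q)),
    (∀ c ∈ C, c.length = n) ∧
    (∀ y : List (Fin q), y.length = n - R → ∃ c ∈ C, y.Sublist c) ∧
    C.card = KD q n R := by
  apply Nat.sInf_mem (s := {k : ℕ | ∃ C : Finset (List (Fin q)),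
    (∀ c ∈ C, c.length = n) ∧
    (∀ y : List (Fin q), y.length = n - R → ∃ c ∈ C, y.Sublist c) ∧
    C.card = k})
  refine ⟨_, wordsF q n, fun c hc => mem_wordsF.1 hc, fun y hy => ?_, rfl⟩
  obtain ⟨c, hc, hs⟩ := exists_sup hq y n (by omega)
  exact ⟨c, mem_wordsF.2 hc, hs⟩

open Classical in
lemma KD_rec {q : ℕ} (hq : 1 ≤ q) (m k r M : ℕ) (hr : r ≤ m) (hk : 1 ≤ k) :
    (KD q (m + k) (r + 1) : ℝ) ≤ M * KD q k 1 +
      Real.exp (-(((m.choose r * (q - 1) ^ r : ℕ) : ℝ) / (q:ℝ) ^ m * M)) * (q:ℝ) ^ (m - r)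
        * KD q (k + r) (r + 1) := by
  have hball : ∀ b ∈ wordsF q (m - r), m.choose r * (q - 1) ^ r ≤
      ((wordsF q m).filter (fun a => b.Sublist a)).card := by
    intro b hb
    exact ball_card q hq m r b (by rw [mem_wordsF.1 hb]; omega)
  obtain ⟨S, hSA, hSM, U, hUP, hU, hS⟩ := greedy' (wordsF q m) (wordsF q (m - r))
    (fun a b => b.Sublist a) (m.choose r * (q - 1) ^ r)
    (by rw [card_wordsF]; positivity) (fun b hb => by convert hball b hb) M
  obtain ⟨C1, hC1, hC1', hC1c⟩ := KD_spec hq k 1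
  obtain ⟨C2, hC2, hC2', hC2c⟩ := KD_spec hq (k + r) (r + 1)
  have hmain : KD q (m + k) (r + 1) ≤ S.card * C1.card + U.card * C2.card := by
    refine (KD_le (((S ×ˢ C1).image (fun p => p.1 ++ p.2)) ∪
      ((U ×ˢ C2).image (fun p => p.1 ++ p.2))) ?_ ?_).trans ?_
    · intro c hc
      rcases Finset.mem_union.1 hc with hc | hc
      · obtain ⟨p, hp, rfl⟩ := Finset.mem_image.1 hc
        obtain ⟨h1, h2⟩ := Finset.mem_product.1 hp
        rw [List.length_append, mem_wordsF.1 (hSA h1), hC1 _ h2]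
      · obtain ⟨p, hp, rfl⟩ := Finset.mem_image.1 hc
        obtain ⟨h1, h2⟩ := Finset.mem_product.1 hp
        rw [List.length_append, mem_wordsF.1 (hUP h1), hC2 _ h2]
        omega
    · intro y hy
      have e : y.take (m - r) ++ y.drop (m - r) = y := List.take_append_drop _ _
      have l1 : (y.take (m - r)).length = m - r := by simp; omega
      have l2 : (y.drop (m - r)).length = k - 1 := by simp; omega
      by_cases hu : y.take (m - r) ∈ U
      · obtain ⟨c, hc, hs⟩ := hC2' (y.drop (m - r)) (by omega)
        refine ⟨y.take (m - r) ++ c, Finset.mem_union_right _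
          (Finset.mem_image.2 ⟨(_, c), Finset.mem_product.2 ⟨hu, hc⟩, rfl⟩), ?_⟩
        conv_lhs => rw [← e]
        exact (List.Sublist.refl _).append hs
      · obtain ⟨a, ha, has⟩ := hU _ (mem_wordsF.2 l1) hu
        obtain ⟨c, hc, hs⟩ := hC1' (y.drop (m - r)) (by omega)
        refine ⟨a ++ c, Finset.mem_union_left _
          (Finset.mem_image.2 ⟨(_, c), Finset.mem_product.2 ⟨ha, hc⟩, rfl⟩), ?_⟩
        conv_lhs => rw [← e]
        exact has.append hs
    · refine (Finset.card_union_le _ _).trans (Nat.add_le_add ?_ ?_)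
      · exact Finset.card_image_le.trans (Finset.card_product _ _).le
      · exact Finset.card_image_le.trans (Finset.card_product _ _).le
  rw [hC1c, hC2c] at hmain
  have hmain' : (KD q (m + k) (r + 1) : ℝ) ≤ S.card * KD q k 1 + U.card * KD q (k + r) (r + 1) := by
    exact_mod_cast hmain
  refine hmain'.trans ?_
  have hSM' : (S.card : ℝ) ≤ M := by exact_mod_cast hSM
  simp only [card_wordsF] at hS
  push_cast at hS ⊢
  gcongr

/-! VT codes -/

def vtW {q : ℕ} : List (Fin q) → ℕ
  | [] => 0
  | b :: l => (if b.val = 0 then 0 else 1) + vtW l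

def vtS {q : ℕ} : List (Fin q) → ℕ
  | [] => 0
  | b :: l => (if b.val = 0 then 0 else 1) + vtS l + vtW l

lemma vtW_le {q : ℕ} (l : List (Fin q)) : vtW l ≤ l.length := by
  induction l with
  | nil => simp [vtW]
  | cons b l ih => simp only [vtW, List.length_cons]; split_ifs <;> omega

lemma vt_ins {q : ℕ} (hq : 2 ≤ q) (y : List (Fin q)) : ∀ j ≤ y.length + 1,
    ∃ x : List (Fin q), x.length = y.length + 1 ∧ y.Sublist x ∧ vtS x = vtS y + j ∧
      vtW x = vtW y + if j ≤ vtW y then 0 else 1 := by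
  induction y with
  | nil =>
    intro j hj
    simp only [List.length_nil, zero_add] at hj
    interval_cases j
    · exact ⟨[⟨0, by omega⟩], by simp [vtS, vtW]⟩
    · exact ⟨[⟨1, by omega⟩], by simp [vtS, vtW]⟩
  | cons b l ih =>
    intro j hj
    simp only [List.length_cons] at hj
    have cW : ∀ (b : Fin q) l, vtW (b :: l) = (if b.val = 0 then 0 else 1) + vtW l :=
      fun _ _ => rfl
    have cS : ∀ (b : Fin q) l, vtS (b :: l) = (if b.val = 0 then 0 else 1) + vtS l + vtW l :=
      fun _ _ => rfl
    have cWb := cW b l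
    have cSb := cS b l
    have hwl := vtW_le l
    by_cases h1 : j ≤ vtW l
    · obtain ⟨x, hx, hs, hS, hW⟩ := ih j (by omega)
      rw [if_pos h1] at hW
      refine ⟨b :: x, by simp [hx], hs.cons_cons b, ?_, ?_⟩
      · rw [cS, cSb, hS, hW]; omega
      · rw [if_pos (by omega), cW, hW, cWb]; omega
    · by_cases h2 : j = vtW l + 1
      · by_cases hb : b.val = 0
        · rw [if_pos hb] at cWb cSb
          refine ⟨⟨1, by omega⟩ :: b :: l, by simp, List.sublist_cons_self _ _, ?_, ?_⟩
          · rw [cS, if_neg (by simp)]; omega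
          · rw [cW, if_neg (by simp), if_neg (by omega)]; omega
        · rw [if_neg hb] at cWb cSb
          refine ⟨⟨0, by omega⟩ :: b :: l, by simp, List.sublist_cons_self _ _, ?_, ?_⟩
          · rw [cS, if_pos (by simp)]; omega
          · rw [cW, if_pos (by simp), if_pos (by omega)]; omega
      · obtain ⟨x, hx, hs, hS, hW⟩ := ih (j - 1) (by omega)
        rw [if_neg (by omega)] at hW
        refine ⟨b :: x, by simp [hx], hs.cons_cons b, ?_, ?_⟩
        · rw [cS, hS, hW]; omega
        · have : ¬ j ≤ vtW (b :: l) := by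
            rw [cWb]; split_ifs <;> omega
          rw [if_neg this, cW, hW]; omega

open Classical in
lemma KD_one {q : ℕ} (hq : 2 ≤ q) (n : ℕ) (hn : 1 ≤ n) : (n + 1) * KD q n 1 ≤ q ^ n := by
  have hmaps : ∀ x ∈ wordsF q n, vtS x % (n + 1) ∈ Finset.range (n + 1) := fun x _ =>
    Finset.mem_range.2 (Nat.mod_lt _ (by omega))
  have hcard := Finset.card_eq_sum_card_fiberwise (f := fun x => vtS x % (n+1)) hmaps
  rw [card_wordsF] at hcard
  rw [hcard]
  have : ∀ a ∈ Finset.range (n + 1),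
      KD q n 1 ≤ ((wordsF q n).filter (fun x => vtS x % (n + 1) = a)).card := by
    intro a ha
    rw [Finset.mem_range] at ha
    apply KD_le
    · intro c hc; exact mem_wordsF.1 (Finset.mem_filter.1 hc).1
    · intro y hy
      have hlt := Nat.mod_lt (vtS y) (show 0 < n + 1 by omega)
      have hj : ∃ j ≤ n, (vtS y + j) % (n + 1) = a := by
        by_cases h : vtS y % (n + 1) ≤ a
        · refine ⟨a - vtS y % (n+1), by omega, ?_⟩
          rw [Nat.add_mod, Nat.mod_eq_of_lt (a := a - _) (by omega), Nat.add_sub_cancel' h,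
            Nat.mod_eq_of_lt ha]
        · refine ⟨a + (n + 1) - vtS y % (n+1), by omega, ?_⟩
          rw [Nat.add_mod, Nat.mod_eq_of_lt (a := a + (n+1) - _) (by omega),
            Nat.add_sub_cancel' (by omega), Nat.add_mod_right, Nat.mod_eq_of_lt ha]
      obtain ⟨j, hj, hja⟩ := hj
      obtain ⟨x, hx, hs, hS, -⟩ := vt_ins hq y j (by omega)
      exact ⟨x, Finset.mem_filter.2 ⟨mem_wordsF.2 (by omega), by rw [hS, hja]⟩, hs⟩
  have := Finset.card_nsmul_le_sum _ _ _ this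
  simpa using this

lemma muD_nonneg {q : ℕ} (hq : 2 ≤ q) (n R : ℕ) : 0 ≤ muD q n R := by
  have : (0:ℝ) ≤ (q:ℝ) - 1 := by
    have : (2:ℝ) ≤ q := by exact_mod_cast hq
    linarith
  unfold muD; positivity

lemma muD_one_le {q : ℕ} (hq : 2 ≤ q) (n : ℕ) (hn : 1 ≤ n) : muD q n 1 ≤ (q:ℝ) - 1 := by
  have h2 : (2:ℝ) ≤ q := by exact_mod_cast hq
  have h : ((n:ℝ) + 1) * KD q n 1 ≤ (q:ℝ) ^ n := by exact_mod_cast KD_one hq n hn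
  unfold muD
  rw [div_le_iff₀ (by positivity)]
  simp only [pow_one, Nat.factorial_one, Nat.cast_one, mul_one]
  have h3 : (KD q n 1 : ℝ) * n ≤ (q:ℝ)^n := by
    have : (0:ℝ) ≤ KD q n 1 := by positivity
    nlinarith
  nlinarith

noncomputable def gfun (q r : ℕ) (x : ℝ) (m k : ℕ) : ℝ :=
  x * (((m + k : ℕ) : ℝ) / ((m + 1 - r : ℕ) : ℝ)) ^ r * (((m + k : ℕ) : ℝ) / (k : ℝ)) / ((r : ℝ) + 1) +
    ((m + k : ℕ) : ℝ) ^ (r + 1) * ((q : ℝ) - 1) ^ r / ((k : ℝ) * ((r + 1).factorial : ℝ)) / (q : ℝ) ^ m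

lemma mu_rec {q : ℕ} (hq : 2 ≤ q) (m k r : ℕ) (hr : r ≤ m) (hk : 1 ≤ k) (x : ℝ) (hx : 0 ≤ x)
    (hn : m + k ≤ (r + 1) * (k + r)) :
    muD q (m + k) (r + 1) ≤ muD q k 1 * gfun q r x m k +
      Real.exp (-x) * ((r : ℝ) + 1) ^ (r + 1) * muD q (k + r) (r + 1) := by
  have h2 : (2:ℝ) ≤ q := by exact_mod_cast hq
  have hq1 : (0:ℝ) < (q:ℝ) - 1 := by linarith
  have hq0 : (0:ℝ) < q := by linarith
  have hk0 : (0:ℝ) < k := by exact_mod_cast hk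
  have hm0 : (0:ℝ) < ((m + 1 - r : ℕ) : ℝ) := by
    have : 0 < m + 1 - r := by omega
    exact_mod_cast this
  set p : ℝ := ((m.choose r * (q - 1) ^ r : ℕ) : ℝ) / (q:ℝ) ^ m with hp
  have hpc : p = (m.choose r : ℝ) * ((q:ℝ) - 1) ^ r / (q:ℝ) ^ m := by
    rw [hp]; push_cast [Nat.cast_sub (show 1 ≤ q by omega)]; rfl
  have hchoose : ((m + 1 - r : ℕ) : ℝ) ^ r / (r.factorial : ℝ) ≤ m.choose r := by
    rw [div_le_iff₀ (by positivity)]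
    have := Nat.pow_sub_le_descFactorial m r
    rw [Nat.descFactorial_eq_factorial_mul_choose] at this
    have h' : ((m + 1 - r : ℕ) : ℝ) ^ r ≤ r.factorial * m.choose r := by exact_mod_cast this
    linarith
  set p0 : ℝ := ((m + 1 - r : ℕ) : ℝ) ^ r / (r.factorial : ℝ) * ((q:ℝ) - 1) ^ r / (q:ℝ) ^ m with hp0
  have hp0pos : 0 < p0 := by positivity
  have hp0p : p0 ≤ p := by rw [hp0, hpc]; gcongr
  have hppos : 0 < p := lt_of_lt_of_le hp0pos hp0p
  set M : ℕ := ⌈x / p⌉₊ with hM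
  have hM1 : x ≤ p * M := by
    have := Nat.le_ceil (x / p)
    rw [div_le_iff₀ hppos] at this
    linarith
  have hM2 : (M : ℝ) ≤ x / p0 + 1 := by
    have h1 := (Nat.ceil_lt_add_one (a := x / p) (by positivity)).le
    have h2 : x / p ≤ x / p0 := by gcongr
    linarith
  have hrec := KD_rec (q := q) (by omega) m k r M hr hk
  rw [← hp] at hrec
  have hrec2 : (KD q (m + k) (r + 1) : ℝ) ≤ (x / p0 + 1) * KD q k 1 +
      Real.exp (-x) * (q:ℝ) ^ (m - r) * KD q (k + r) (r + 1) := by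
    refine hrec.trans ?_
    gcongr
  set n : ℕ := m + k with hnn
  set D : ℝ := (n : ℝ) ^ (r + 1) * ((q : ℝ) - 1) ^ (r + 1) / ((q : ℝ) ^ n * ((r + 1).factorial : ℝ))
    with hD
  have hD0 : 0 ≤ D := by positivity
  have e0 : muD q n (r + 1) = KD q n (r + 1) * D := by rw [hD]; unfold muD; ring
  have e1 : (x / p0 + 1) * KD q k 1 * D = muD q k 1 * gfun q r x m k := by
    rw [hD, hp0]; unfold muD gfun
    rw [← hnn]
    have : (q:ℝ) ^ n = (q:ℝ)^m * (q:ℝ)^k := by rw [hnn, pow_add]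
    rw [this, Nat.factorial_succ]
    push_cast
    have hf : (0:ℝ) < (r.factorial : ℝ) := by positivity
    simp only [pow_one, Nat.factorial_one, Nat.cast_one, mul_one, div_pow]
    field_simp
    ring
  have hkr : (0:ℝ) < ((k + r : ℕ) : ℝ) := by
    have : 0 < k + r := by omega
    exact_mod_cast this
  have e2 : Real.exp (-x) * (q:ℝ) ^ (m - r) * KD q (k + r) (r + 1) * D
      = Real.exp (-x) * ((n:ℝ) / ((k + r : ℕ) : ℝ)) ^ (r + 1) * muD q (k + r) (r + 1) := by
    rw [hD]; unfold muD
    have : (q:ℝ) ^ n = (q:ℝ)^(m - r) * (q:ℝ)^(k + r) := by rw [hnn, ← pow_add]; congr 1; omega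
    rw [this]
    simp only [div_pow]
    field_simp
  have e3 : (n:ℝ) / ((k + r : ℕ) : ℝ) ≤ (r:ℝ) + 1 := by
    rw [div_le_iff₀ hkr]
    exact_mod_cast hn
  have hmu := muD_nonneg hq (k + r) (r + 1)
  rw [e0]
  calc (KD q n (r + 1) : ℝ) * D ≤ ((x / p0 + 1) * KD q k 1 +
      Real.exp (-x) * (q:ℝ) ^ (m - r) * KD q (k + r) (r + 1)) * D := by gcongr
    _ = muD q k 1 * gfun q r x m k +
        Real.exp (-x) * ((n:ℝ) / ((k + r : ℕ) : ℝ)) ^ (r + 1) * muD q (k + r) (r + 1) := by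
      rw [add_mul, e1, e2]
    _ ≤ _ := by gcongr

lemma tendsto_nat_div_ratio (R : ℕ) (hR : 1 ≤ R) :
    Tendsto (fun n : ℕ => ((n / R : ℕ) : ℝ) / n) atTop (𝓝 (1 / R)) := by
  have h := tendsto_nat_floor_mul_div_atTop (R := ℝ) (a := 1 / (R:ℝ)) (by positivity)
  have h2 := h.comp (tendsto_natCast_atTop_atTop (R := ℝ))
  refine h2.congr (fun n => ?_)
  simp only [Function.comp]
  congr 2
  rw [one_div_mul_eq_div, Nat.floor_div_natCast, Nat.floor_natCast]

lemma gfun_tendsto {q : ℕ} (hq : 2 ≤ q) (r : ℕ) (hr : 1 ≤ r) (x : ℝ) :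
    Tendsto (fun n : ℕ => gfun q r x (n - n / (r + 1)) (n / (r + 1))) atTop
      (𝓝 (x * (((r:ℝ) + 1) / r) ^ r)) := by
  have h2 : (2:ℝ) ≤ q := by exact_mod_cast hq
  have hr0 : (0:ℝ) < r := by exact_mod_cast hr
  have hk := tendsto_nat_div_ratio (r + 1) (by omega)
  push_cast at hk
  have hle : ∀ n : ℕ, n / (r + 1) ≤ n := fun n => Nat.div_le_self _ _
  have hle2 : ∀ n : ℕ, 2 * (n / (r + 1)) ≤ n := fun n => by
    have h1 : n / (r + 1) ≤ n / 2 := Nat.div_le_div_left (by omega) (by omega)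
    omega
  have hm_top : Tendsto (fun n : ℕ => n - n / (r + 1)) atTop atTop := by
    rw [tendsto_atTop]
    intro b
    filter_upwards [eventually_ge_atTop (2 * b)] with n hn
    have := hle2 n
    omega
  have hk1 : Tendsto (fun n : ℕ => (n:ℝ) / ((n / (r + 1) : ℕ) : ℝ)) atTop (𝓝 ((r:ℝ) + 1)) := by
    have := hk.inv₀ (by positivity)
    simpa using this
  have hc : Tendsto (fun n : ℕ => ((1:ℝ) - r) / n) atTop (𝓝 0) :=
    tendsto_const_div_atTop_nhds_zero_nat _
  have hm1 : Tendsto (fun n : ℕ => (n:ℝ) / ((n - n / (r + 1) + 1 - r : ℕ) : ℝ)) atTop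
      (𝓝 (((r:ℝ) + 1) / r)) := by
    have h1 : Tendsto (fun n : ℕ => 1 - ((n / (r + 1) : ℕ) : ℝ) / n + ((1:ℝ) - r) / n) atTop
        (𝓝 (1 - 1 / ((r:ℝ) + 1) + 0)) := (tendsto_const_nhds.sub hk).add hc
    have h3 : (1 - 1 / ((r:ℝ) + 1) + 0) = r / (r + 1) := by field_simp; ring
    rw [h3] at h1
    have h4 := h1.inv₀ (by positivity)
    rw [inv_div] at h4
    refine h4.congr' ?_
    filter_upwards [eventually_ge_atTop (2 * r + 1)] with n hn
    have hn0 : (0:ℝ) < n := by exact_mod_cast (by omega : 0 < n)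
    have := hle2 n
    rw [Nat.cast_sub (by omega), Nat.cast_add, Nat.cast_sub (hle n)]
    rw [← inv_div]
    congr 1
    push_cast
    field_simp
    ring
  have hsec : Tendsto (fun n : ℕ => (n : ℝ) ^ (r + 1) * ((q : ℝ) - 1) ^ r /
      (((n / (r + 1) : ℕ) : ℝ) * ((r + 1).factorial : ℝ)) / (q : ℝ) ^ (n - n / (r + 1))) atTop (𝓝 0) := by
    have h1 := (tendsto_pow_const_div_const_pow_of_one_lt (r + 1) (show (1:ℝ) < q by linarith)).comp hm_top
    have h3 := h1.const_mul ((2:ℝ) ^ (r + 1) * ((q : ℝ) - 1) ^ r)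
    rw [mul_zero] at h3
    have hq1 : (0:ℝ) ≤ (q:ℝ) - 1 := by linarith
    refine squeeze_zero' ?_ ?_ h3
    · exact Eventually.of_forall (fun n => by positivity)
    · filter_upwards [eventually_ge_atTop (r + 1)] with n hn
      simp only [Function.comp]
      have hk1 : 1 ≤ n / (r + 1) := (Nat.one_le_div_iff (by omega)).2 hn
      have hk1' : (1:ℝ) ≤ ((n / (r + 1) : ℕ) : ℝ) := by exact_mod_cast hk1
      have hf1 : (1:ℝ) ≤ ((r + 1).factorial : ℝ) := by exact_mod_cast Nat.factorial_pos (r + 1)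
      have hd : (1:ℝ) ≤ ((n / (r + 1) : ℕ) : ℝ) * ((r + 1).factorial : ℝ) := by nlinarith
      have hnm : (n:ℝ) ≤ 2 * ((n - n / (r + 1) : ℕ) : ℝ) := by
        have := hle2 n
        exact_mod_cast (by omega : n ≤ 2 * (n - n / (r + 1)))
      have hnum : (0:ℝ) ≤ (n : ℝ) ^ (r + 1) * ((q : ℝ) - 1) ^ r := by positivity
      calc _ ≤ (n : ℝ) ^ (r + 1) * ((q : ℝ) - 1) ^ r / (q : ℝ) ^ (n - n / (r + 1)) := by
            gcongr
            exact div_le_self hnum hd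
        _ ≤ (2 * ((n - n / (r + 1) : ℕ) : ℝ)) ^ (r + 1) * ((q : ℝ) - 1) ^ r / (q : ℝ) ^ (n - n / (r + 1)) := by
            gcongr
        _ = _ := by rw [mul_pow]; ring
  have hfin := ((((hm1.pow r).const_mul x).mul hk1).div_const ((r:ℝ) + 1)).add hsec
  have : x * (((r:ℝ) + 1) / r) ^ r * ((r:ℝ) + 1) / ((r:ℝ) + 1) + 0 = x * (((r:ℝ) + 1) / r) ^ r := by
    field_simp; ring
  rw [this] at hfin
  refine hfin.congr (fun n => ?_)
  unfold gfun
  rw [Nat.sub_add_cancel (hle n)]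

lemma limsup_rec (a b : ℕ → ℝ) (f : ℕ → ℕ) (lam β : ℝ) (N : ℕ) (ha : ∀ n, 0 ≤ a n)
    (hl0 : 0 ≤ lam) (hl1 : lam < 1) (hf : Tendsto f atTop atTop) (hfN : ∀ n ≥ N, f n < n)
    (hrec : ∀ n ≥ N, a n ≤ b n + lam * a (f n)) (hb : ∀ n ≥ N, b n ≤ β) :
    limsup a atTop ≤ β / (1 - lam) := by
  have hbd : ∃ T, ∀ n, a n ≤ T := by
    refine ⟨max (∑ i ∈ Finset.range N, a i) (β / (1 - lam)), fun n => ?_⟩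
    induction n using Nat.strong_induction_on with
    | _ n ih =>
      by_cases h : n < N
      · exact le_max_of_le_left
          (Finset.single_le_sum (fun i _ => ha i) (Finset.mem_range.2 h))
      · push Not at h
        set T := max (∑ i ∈ Finset.range N, a i) (β / (1 - lam)) with hT
        have h1 : β / (1 - lam) ≤ T := le_max_right _ _
        rw [div_le_iff₀ (by linarith)] at h1
        have h2 := ih (f n) (hfN n h)
        have h3 : lam * a (f n) ≤ lam * T := by gcongr
        linarith [hrec n h, hb n h]
  obtain ⟨T, hT⟩ := hbd
  have hbdd : IsBoundedUnder (· ≤ ·) atTop a := isBoundedUnder_of ⟨T, hT⟩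
  have hcob : IsCoboundedUnder (· ≤ ·) atTop a :=
    (isBoundedUnder_of (r := (· ≥ ·)) ⟨0, ha⟩).isCoboundedUnder_le
  set L := limsup a atTop with hL
  have key : ∀ ε > 0, L ≤ β + lam * (L + ε) := by
    intro ε hε
    have h1 : ∀ᶠ n in atTop, a n < L + ε :=
      eventually_lt_of_limsup_lt (by rw [← hL]; linarith) hbdd
    have h2 := hf.eventually h1
    apply limsup_le_of_le hcob
    filter_upwards [h2, eventually_ge_atTop N] with n hn hnN
    have : lam * a (f n) ≤ lam * (L + ε) := by gcongr
    linarith [hrec n hnN, hb n hnN]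
  have : L ≤ β + lam * L := by
    apply le_of_forall_pos_le_add
    intro ε hε
    have := key ε hε
    nlinarith
  rw [le_div_iff₀ (by linarith)]
  linarith

lemma num_bound (A t : ℝ) (ht : 0 < t) (hA : A = t ^ 2 / 2) :
    (A + t) / (1 - Real.exp (-t)) ≤ A + t + 1 := by
  have h1 := Real.quadratic_le_exp_of_nonneg ht.le
  have h2 : Real.exp (-t) < 1 := by simpa using ht
  rw [div_le_iff₀ (by linarith)]
  have h3 : Real.exp (-t) * Real.exp t = 1 := by rw [← Real.exp_add]; simp
  have h4 : Real.exp (-t) * (1 + t + t ^ 2 / 2) ≤ 1 := by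
    calc _ ≤ Real.exp (-t) * Real.exp t := by gcongr
      _ = 1 := h3
  rw [hA]
  nlinarith

theorem multiple_deletion_covering_density (q R : ℕ) (hq : 2 ≤ q) (hR : 2 ≤ R) :
    Filter.limsup (fun n : ℕ => muD q n R) Filter.atTop ≤
      Real.exp 1 * ((R : ℝ) * Real.log R + Real.sqrt (2 * R * Real.log R) + 1) *
        Filter.limsup (fun n : ℕ => muD q n 1) Filter.atTop := by
  obtain ⟨r, rfl⟩ : ∃ r, R = r + 1 := ⟨R - 1, by omega⟩
  have hr : 1 ≤ r := by omega
  have hr0 : (0:ℝ) < r := by exact_mod_cast hr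
  have hRr : ((r + 1 : ℕ) : ℝ) = (r:ℝ) + 1 := by push_cast; rfl
  rw [hRr]
  set A : ℝ := ((r:ℝ) + 1) * Real.log ((r:ℝ) + 1) with hA
  have hlog : 0 < Real.log ((r:ℝ) + 1) := Real.log_pos (by linarith)
  have hA0 : 0 < A := by positivity
  have hsq : 2 * ((r:ℝ) + 1) * Real.log ((r:ℝ) + 1) = 2 * A := by rw [hA]; ring
  rw [hsq]
  set t := Real.sqrt (2 * A) with ht
  have ht0 : 0 < t := Real.sqrt_pos.2 (by linarith)
  have hAt : A = t ^ 2 / 2 := by rw [ht, Real.sq_sqrt (by linarith)]; ring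
  set x := A + t with hx
  have hx0 : 0 < x := by linarith
  set L1 := limsup (fun n : ℕ => muD q n 1) atTop with hL1
  have hlam : Real.exp (-x) * ((r:ℝ) + 1) ^ (r + 1) = Real.exp (-t) := by
    have : ((r:ℝ) + 1) ^ (r + 1) = Real.exp A := by
      rw [hA, ← hRr, Real.exp_nat_mul, Real.exp_log (by rw [hRr]; linarith)]
    rw [this, ← Real.exp_add]; congr 1; rw [hx]; ring
  have hl1 : Real.exp (-t) < 1 := by simpa using ht0
  have hbdd : IsBoundedUnder (· ≤ ·) atTop (fun n : ℕ => muD q n 1) :=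
    ⟨(q:ℝ) - 1, by
      rw [eventually_map]
      filter_upwards [eventually_ge_atTop 1] with n hn using muD_one_le hq n hn⟩
  have hL10 : 0 ≤ L1 := by
    apply le_limsup_of_frequently_le _ hbdd
    exact Frequently.of_forall (fun n => muD_nonneg hq n 1)
  set G := x * (((r:ℝ) + 1) / r) ^ r with hG
  have hG0 : 0 < G := by positivity
  have hGe : G ≤ Real.exp 1 * x := by
    have h1 : ((r:ℝ) + 1) / r ≤ Real.exp (1 / r) := by
      have := Real.add_one_le_exp (1 / (r:ℝ))
      have e : ((r:ℝ) + 1) / r = 1 / r + 1 := by field_simp; ring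
      rw [e]; exact this
    have h2 : (((r:ℝ) + 1) / r) ^ r ≤ Real.exp 1 := by
      calc (((r:ℝ) + 1) / r) ^ r ≤ Real.exp (1 / r) ^ r := by gcongr
        _ = Real.exp 1 := by rw [← Real.exp_nat_mul]; congr 1; field_simp
    rw [hG, mul_comm]; gcongr
  have hktop : Tendsto (fun n : ℕ => n / (r + 1)) atTop atTop :=
    Nat.tendsto_div_const_atTop (by omega)
  have hftop : Tendsto (fun n : ℕ => n / (r + 1) + r) atTop atTop :=
    tendsto_atTop_mono (fun n => Nat.le_add_right _ _) hktop
  have key : ∀ ε > 0, limsup (fun n : ℕ => muD q n (r + 1)) atTop ≤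
      (L1 + ε) * (G + ε) / (1 - Real.exp (-t)) := by
    intro ε hε
    have h1 : ∀ᶠ n : ℕ in atTop, muD q (n / (r + 1)) 1 < L1 + ε :=
      hktop.eventually (eventually_lt_of_limsup_lt (by rw [← hL1]; linarith) hbdd)
    have h2 : ∀ᶠ n : ℕ in atTop, gfun q r x (n - n / (r + 1)) (n / (r + 1)) < G + ε :=
      (gfun_tendsto hq r hr x).eventually (gt_mem_nhds (by linarith))
    obtain ⟨N, hN⟩ := eventually_atTop.1 (h1.and (h2.and (eventually_ge_atTop (2 * r + 2))))
    have hdiv2 : ∀ n : ℕ, n / (r + 1) ≤ n / 2 := fun n => Nat.div_le_div_left (by omega) (by omega)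
    refine limsup_rec _ (fun n => muD q (n / (r + 1)) 1 * gfun q r x (n - n / (r + 1)) (n / (r + 1)))
      (fun n => n / (r + 1) + r) (Real.exp (-t)) _ N (fun n => muD_nonneg hq n _)
      (Real.exp_pos _).le hl1 hftop ?_ ?_ ?_
    · intro n hn
      have h3 := (hN n hn).2.2
      have := hdiv2 n
      show n / (r + 1) + r < n
      omega
    · intro n hn
      have h3 := (hN n hn).2.2
      have h4 := hdiv2 n
      have h5 : 1 ≤ n / (r + 1) := (Nat.one_le_div_iff (by omega)).2 (by omega)
      have h6 : n - n / (r + 1) + n / (r + 1) = n := by omega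
      have h7 : n - n / (r + 1) + n / (r + 1) ≤ (r + 1) * (n / (r + 1) + r) := by
        rw [h6]
        have h8 := Nat.div_add_mod n (r + 1)
        have h9 := Nat.mod_lt n (show 0 < r + 1 by omega)
        nlinarith
      have := mu_rec hq (n - n / (r + 1)) (n / (r + 1)) r (by omega) h5 x hx0.le h7
      rw [hlam, h6] at this
      exact this
    · intro n hn
      obtain ⟨h3, h4, -⟩ := hN n hn
      have := muD_nonneg hq (n / (r + 1)) 1
      show muD q (n / (r + 1)) 1 * gfun q r x (n - n / (r + 1)) (n / (r + 1)) ≤ _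
      calc _ ≤ muD q (n / (r + 1)) 1 * (G + ε) := by gcongr
        _ ≤ _ := by gcongr
  have hlim : limsup (fun n : ℕ => muD q n (r + 1)) atTop ≤ L1 * G / (1 - Real.exp (-t)) := by
    have hc : Tendsto (fun ε : ℝ => (L1 + ε) * (G + ε) / (1 - Real.exp (-t))) (𝓝[>] 0)
        (𝓝 ((L1 + 0) * (G + 0) / (1 - Real.exp (-t)))) := by
      apply Tendsto.mono_left _ nhdsWithin_le_nhds
      exact (Continuous.tendsto (by fun_prop) 0)
    simp only [add_zero] at hc
    refine ge_of_tendsto hc ?_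
    filter_upwards [self_mem_nhdsWithin] with ε hε using key ε hε
  refine hlim.trans ?_
  have hnum := num_bound A t ht0 hAt
  have hpos : 0 < 1 - Real.exp (-t) := by linarith
  calc L1 * G / (1 - Real.exp (-t)) ≤ L1 * (Real.exp 1 * x) / (1 - Real.exp (-t)) := by gcongr
    _ = Real.exp 1 * (x / (1 - Real.exp (-t))) * L1 := by ring
    _ ≤ Real.exp 1 * (A + t + 1) * L1 := by gcongr
end
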